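/- Let A be a finite abelian group, G a finite group, α : G → Aut(A) an action, and K = A ⋊_α G. Then every irreducible complex character χ of K is of the form χ = Ind_{K(σ)}^K (σ⊙χ_τ) for some character σ ∈ Â and some irreducible complex character χ_τ of the stabilizer G(σ), where K(σ) = A ⋊_α G(σ) and (σ⊙χ_τ)(a, s) = σ(a)·χ_τ(s). (This is the group case of Proposition 4.1, the Mackey machine for semidirect products with abelian normal part.) -/

import Mathlib

namespace Stmt15

open scoped Classical in
/-- The function induced from a subgroup `H` of a finite group `K`:
`(Ind_H^K f)(k) = (1/|H|) · Σ_{t ∈ K, t k t⁻¹ ∈ H} f (t k t⁻¹)`. -/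
noncomputable def ind {K : Type*} [Group K] [Fintype K] (H : Subgroup K) (f : K → ℂ) :
    K → ℂ :=
  fun k => (1 / (Nat.card H : ℂ)) * ∑ t : K, if t * k * t⁻¹ ∈ H then f (t * k * t⁻¹) else 0

instance {A G : Type} [Group A] [Fintype A] [Group G] [Fintype G] {α : G →* MulAut A} :
    Fintype (A ⋊[α] G) :=
  Fintype.ofEquiv (A × G)
    { toFun := fun p => ⟨p.1, p.2⟩
      invFun := fun x => (x.left, x.right)
      left_inv := fun _ => rfl
      right_inv := fun _ => rfl }

/-!
Let `ρ` be an irreducible representation of `K = A ⋊ G`. By Schur's lemma some character `σ` of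
`A` has a nonzero joint eigenspace `W`, its weight space. Joint eigenspaces for distinct characters
are independent and `K` permutes them through the action of `G` on characters, so the translates of
`W` are in direct sum and are indexed by `K ⧸ K(σ)`. Their sum is stable, hence everything: `ρ` is
induced from `W`, and irreducibility of `ρ` forces that of `W`. On `W` the group `A` acts by the
scalars `σ`, so `W` is `σ⊙τ` with `τ` the restriction of `W` to `G(σ)`.

The projection `P` of `V` onto `W` along the other translates satisfies `∑ q, ρ q * P * ρ q⁻¹ = 1`,
and multiplying by `ρ x` and taking traces gives the formula for the induced character.
-/

section Irreducible

variable {k G V : Type*} [Field k] [AddCommGroup V] [Module k V]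

theorem isIrreducible_iff [Monoid G] {ρ : Representation k G V} :
    ρ.IsIrreducible ↔ Nontrivial V ∧
      ∀ U : Submodule k V, (∀ g, ∀ v ∈ U, ρ g v ∈ U) → U = ⊥ ∨ U = ⊤ := by
  constructor
  · intro hρ
    refine ⟨(Submodule.nontrivial_iff k).1 ⟨⊥, ⊤, fun h => bot_ne_top (α := Subrepresentation ρ)
      (Subrepresentation.toSubmodule_injective h)⟩, fun U hU => ?_⟩
    exact (eq_bot_or_eq_top (⟨U, hU⟩ : Subrepresentation ρ)).imp
      (congrArg Subrepresentation.toSubmodule) (congrArg Subrepresentation.toSubmodule)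
  · rintro ⟨_, h⟩
    exact
      { exists_pair_ne := ⟨⊥, ⊤, fun h => bot_ne_top (α := Submodule k V)
          (congrArg Subrepresentation.toSubmodule h)⟩
        eq_bot_or_eq_top := fun U => (h U.toSubmodule U.apply_mem_toSubmodule).imp
          (fun h => Subrepresentation.toSubmodule_injective h)
          (fun h => Subrepresentation.toSubmodule_injective h) }

theorem isIrreducible_of_forall_eq_smul {H S : Type*} [Monoid H] [Monoid S]
    {θ : Representation k H V} {τ : Representation k S V} (hθ : θ.IsIrreducible)
    (h : ∀ x, ∃ (c : k) (s : S), θ x = c • τ s) : τ.IsIrreducible := by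
  rw [isIrreducible_iff] at hθ ⊢
  refine ⟨hθ.1, fun U hU => hθ.2 U fun x v hv => ?_⟩
  obtain ⟨c, s, hx⟩ := h x
  rw [hx]
  exact U.smul_mem c (hU s v hv)

theorem isIrreducible_toRepresentation_of_isAtom [Monoid G] {ρ : Representation k G V}
    {S : Subrepresentation ρ} (hS : IsAtom S) : S.toRepresentation.IsIrreducible := by
  have hne : S.toSubmodule ≠ ⊥ := fun h => hS.1 (Subrepresentation.toSubmodule_injective h)
  refine isIrreducible_iff.2 ⟨Submodule.nontrivial_iff_ne_bot.2 hne, fun U hU => ?_⟩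
  let T : Subrepresentation ρ :=
    { toSubmodule := U.map S.toSubmodule.subtype
      apply_mem_toSubmodule := by
        rintro g _ ⟨u, hu, rfl⟩
        exact ⟨_, hU g u hu, rfl⟩ }
  have hTS : T ≤ S := Submodule.map_subtype_le _ _
  have hinj := Submodule.map_injective_of_injective S.toSubmodule.injective_subtype
  refine (hS.le_iff.1 hTS).imp (fun h => hinj ?_) (fun h => hinj ?_)
  · exact (congrArg Subrepresentation.toSubmodule h).trans (Submodule.map_bot _).symm
  · exact (congrArg Subrepresentation.toSubmodule h).trans (Submodule.map_subtype_top _).symm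

theorem exists_isAtom_subrepresentation [Monoid G] [FiniteDimensional k V] [Nontrivial V]
    (ρ : Representation k G V) : ∃ S : Subrepresentation ρ, IsAtom S := by
  have hmono : StrictMono (Subrepresentation.toSubmodule : Subrepresentation ρ → Submodule k V) :=
    fun _ _ h => h
  have : WellFoundedLT (Subrepresentation ρ) := hmono.wellFoundedLT
  have : Nontrivial (Subrepresentation ρ) := ⟨⊥, ⊤, fun h => bot_ne_top (α := Submodule k V)
    (congrArg Subrepresentation.toSubmodule h)⟩
  obtain ⟨S, hS, -⟩ := (eq_bot_or_exists_atom_le (⊤ : Subrepresentation ρ)).resolve_left top_ne_bot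
  exact ⟨S, hS⟩

end Irreducible

section CosetInd

/-- The function on `K` induced from `θ : H → R`, as the sum of `θ (q⁻¹ x q)` over the cosets
`q ∈ K ⧸ H` with `q⁻¹ x q ∈ H`. Unlike `ind` it involves no division and makes sense for every
subgroup of finite index; for infinite index the `finsum` may be the junk value `0`. The choice of
representatives `q.out` is immaterial when `θ` is a class function. -/
noncomputable def cosetInd {K R : Type*} [Group K] [AddCommMonoid R] (H : Subgroup K) (θ : H → R)
    (x : K) : R :=
  ∑ᶠ q : K ⧸ H, Function.extend Subtype.val θ 0 (q.out⁻¹ * x * q.out)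

variable {K R : Type*} [Group K] {H : Subgroup K}

theorem extend_conj [Zero R] {θ : H → R} (hθ : ∀ h x, θ (h * x * h⁻¹) = θ x) (h : H)
    (x : K) : Function.extend Subtype.val θ 0 (h * x * (h : K)⁻¹) =
      Function.extend Subtype.val θ 0 x := by
  by_cases hx : x ∈ H
  · have hx' : (h : K) * x * (h : K)⁻¹ ∈ H := mul_mem (mul_mem h.2 hx) (inv_mem h.2)
    rw [Function.extend_val_apply hx, Function.extend_val_apply hx']
    exact hθ h ⟨x, hx⟩
  · have hx' : (h : K) * x * (h : K)⁻¹ ∉ H := by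
      rwa [H.mul_mem_cancel_right (inv_mem h.2), H.mul_mem_cancel_left h.2]
    rw [Function.extend_val_apply' hx, Function.extend_val_apply' hx']
    rfl

theorem sum_conj_eq_card_smul_cosetInd [Fintype K] [AddCommMonoid R] {θ : H → R}
    (hθ : ∀ h x, θ (h * x * h⁻¹) = θ x) (x : K) :
    ∑ t : K, Function.extend Subtype.val θ 0 (t * x * t⁻¹) = Nat.card H • cosetInd H θ x := by
  have := Fintype.ofFinite (K ⧸ H)
  have := Fintype.ofFinite H
  have hcoset (t : K) : Function.extend Subtype.val θ 0 (t⁻¹ * x * t) =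
      Function.extend Subtype.val θ 0 ((t : K ⧸ H).out⁻¹ * x * (t : K ⧸ H).out) := by
    obtain ⟨h, hh⟩ := QuotientGroup.mk_out_eq_mul H t
    rw [hh, ← extend_conj hθ h⁻¹]
    simp only [H.coe_inv, inv_inv, mul_inv_rev, mul_assoc]
  calc ∑ t : K, Function.extend Subtype.val θ 0 (t * x * t⁻¹)
      = ∑ t : K, Function.extend Subtype.val θ 0 (t⁻¹ * x * t) :=
        Fintype.sum_equiv (Equiv.inv K) _ _ fun t => by rw [Equiv.inv_apply, inv_inv]
    _ = ∑ p : (K ⧸ H) × H,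
          Function.extend Subtype.val θ 0 (p.1.out⁻¹ * x * p.1.out) := by
        exact Fintype.sum_equiv Subgroup.groupEquivQuotientProdSubgroup _ _ hcoset
    _ = Nat.card H • cosetInd H θ x := by
        simp only [Fintype.sum_prod_type_right, Finset.sum_const, Finset.card_univ, cosetInd,
          finsum_eq_sum_of_fintype, Nat.card_eq_fintype_card]

open scoped Classical in
theorem ind_eq_cosetInd [Fintype K] {θ : H → ℂ} (hθ : ∀ h x, θ (h * x * h⁻¹) = θ x) {f : K → ℂ}
    (hf : ∀ h : H, f h = θ h) : ind H f = cosetInd H θ := by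
  ext x
  have hterm (y : K) : (if y ∈ H then f y else 0) = Function.extend Subtype.val θ 0 y := by
    split_ifs with hy
    · rw [Function.extend_val_apply hy, ← hf ⟨y, hy⟩]
    · rw [Function.extend_val_apply' hy, Pi.zero_apply]
  have hcard : (Nat.card H : ℂ) ≠ 0 := Nat.cast_ne_zero.2 Nat.card_pos.ne'
  simp only [ind, hterm]
  rw [sum_conj_eq_card_smul_cosetInd hθ, nsmul_eq_mul, one_div, inv_mul_cancel_left₀ hcard]

end CosetInd

section Induced

variable {k K V : Type*} [CommRing k] [Group K] [AddCommGroup V] [Module k V]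
  {ρ : Representation k K V} {H : Subgroup K}

/-- The translate `q W` of an `H`-stable subspace `W` by a coset `q ∈ K ⧸ H`; any representative
of `q` may be used, see `map_le_translate`. -/
noncomputable def translate (W : Subrepresentation (ρ.comp H.subtype)) (q : K ⧸ H) :
    Submodule k V :=
  W.toSubmodule.map (ρ q.out)

variable {W : Subrepresentation (ρ.comp H.subtype)}

theorem map_le_translate (t : K) : W.toSubmodule.map (ρ t) ≤ translate W t := by
  rintro _ ⟨w, hw, rfl⟩
  obtain ⟨h, hh⟩ := QuotientGroup.mk_out_eq_mul H t
  refine ⟨ρ (h⁻¹ : H) w, W.apply_mem_toSubmodule h⁻¹ hw, ?_⟩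
  rw [hh, ← Module.End.mul_apply, ← map_mul, H.coe_inv, mul_inv_cancel_right]

theorem apply_mem_translate (t : K) {w : V} (hw : w ∈ W.toSubmodule) :
    ρ t w ∈ translate W t :=
  map_le_translate t ⟨w, hw, rfl⟩

theorem translate_one : translate W (1 : K) = W.toSubmodule := by
  refine le_antisymm ?_ fun w hw => by simpa using apply_mem_translate 1 hw
  rintro _ ⟨w, hw, rfl⟩
  obtain ⟨h, hh⟩ := QuotientGroup.mk_out_eq_mul H 1
  rw [hh, one_mul]
  exact W.apply_mem_toSubmodule h hw

theorem apply_mem_iSup_translate (t : K) {v : V} (hv : v ∈ ⨆ q, translate W q) :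
    ρ t v ∈ ⨆ q, translate W q := by
  suffices (⨆ q, translate W q) ≤ (⨆ q, translate W q).comap (ρ t) from this hv
  refine iSup_le fun q => ?_
  rintro _ ⟨w, hw, rfl⟩
  rw [Submodule.mem_comap, ← Module.End.mul_apply, ← map_mul]
  exact Submodule.mem_iSup_of_mem _ (apply_mem_translate _ hw)

variable (W) in
/-- The representation `ρ` of `K` is induced from the `H`-stable subspace `W`: the space of `ρ` is
the direct sum of the translates of `W` by the cosets in `K ⧸ H`. -/
structure IsInducedFrom : Prop where
  iSupIndep : iSupIndep (translate W)
  iSup_eq_top : ⨆ q, translate W q = ⊤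

namespace IsInducedFrom

theorem isCompl (hW : IsInducedFrom W) :
    IsCompl W.toSubmodule (⨆ (q : K ⧸ H) (_ : q ≠ (1 : K)), translate W q) := by
  rw [← translate_one (W := W)]
  refine ⟨hW.iSupIndep _, codisjoint_iff.2 ?_⟩
  rw [← iSup_split_single, hW.iSup_eq_top]

/-- The projection onto `W` along the sum of its other translates. -/
noncomputable def proj (hW : IsInducedFrom W) : V →ₗ[k] W.toSubmodule :=
  W.toSubmodule.projectionOnto _ hW.isCompl

theorem proj_apply_of_mem (hW : IsInducedFrom W) (w : W.toSubmodule) : hW.proj w = w :=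
  Submodule.projectionOnto_apply_left hW.isCompl w

theorem proj_apply_of_notMem (hW : IsInducedFrom W) {t : K} (ht : t ∉ H) {w : V}
    (hw : w ∈ W.toSubmodule) : hW.proj (ρ t w) = 0 := by
  refine (Submodule.projectionOnto_apply_eq_zero_iff hW.isCompl).2 ?_
  refine Submodule.mem_iSup_of_mem (t : K ⧸ H)
    (Submodule.mem_iSup_of_mem ?_ (apply_mem_translate t hw))
  simpa [eq_comm, QuotientGroup.eq] using ht

theorem sum_conj_proj [Fintype (K ⧸ H)] (hW : IsInducedFrom W) :
    ∑ q : K ⧸ H, ρ q.out * (W.toSubmodule.subtype ∘ₗ hW.proj) * ρ q.out⁻¹ = 1 := by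
  suffices h : ⨆ q, translate W q ≤ LinearMap.eqLocus
      (∑ q : K ⧸ H, ρ q.out * (W.toSubmodule.subtype ∘ₗ hW.proj) * ρ q.out⁻¹) 1 from
    LinearMap.ext fun v => h (hW.iSup_eq_top ▸ Submodule.mem_top)
  refine iSup_le fun q => ?_
  rintro _ ⟨w, hw, rfl⟩
  rw [LinearMap.mem_eqLocus, LinearMap.sum_apply, Fintype.sum_eq_single q]
  · simp only [Module.End.mul_apply, LinearMap.comp_apply, Representation.inv_self_apply,
      hW.proj_apply_of_mem ⟨w, hw⟩, Submodule.subtype_apply, Module.End.one_apply]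
  · intro r hr
    have hrq : r.out⁻¹ * q.out ∉ H := by
      rwa [← QuotientGroup.eq, QuotientGroup.out_eq', QuotientGroup.out_eq']
    rw [Module.End.mul_apply, Module.End.mul_apply, ← Module.End.mul_apply (ρ r.out⁻¹), ← map_mul,
      LinearMap.comp_apply, hW.proj_apply_of_notMem hrq hw, map_zero, map_zero]

end IsInducedFrom

end Induced

section InducedIrreducible

variable {k K V : Type*} [Field k] [Group K] [AddCommGroup V] [Module k V]
  {ρ : Representation k K V} {H : Subgroup K} {W : Subrepresentation (ρ.comp H.subtype)}

theorem iSup_translate_eq_top (hρ : ρ.IsIrreducible) (hW : W.toSubmodule ≠ ⊥) :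
    ⨆ q, translate W q = ⊤ := by
  refine ((isIrreducible_iff.1 hρ).2 _ fun t v => apply_mem_iSup_translate t).resolve_left
    fun h => hW (le_bot_iff.1 ?_)
  rw [← translate_one, ← h]
  exact le_iSup (translate W) _

namespace IsInducedFrom

theorem trace_mul_proj [FiniteDimensional k V] (hW : IsInducedFrom W) (y : K) :
    LinearMap.trace k V (ρ y * (W.toSubmodule.subtype ∘ₗ hW.proj)) =
      Function.extend Subtype.val W.toRepresentation.character 0 y := by
  rw [Module.End.mul_eq_comp, ← LinearMap.comp_assoc, LinearMap.trace_comp_comm']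
  by_cases hy : y ∈ H
  · rw [Function.extend_val_apply hy]
    exact congrArg _ (LinearMap.ext fun w =>
      hW.proj_apply_of_mem ⟨ρ y w, W.apply_mem_toSubmodule ⟨y, hy⟩ w.2⟩)
  · rw [Function.extend_val_apply' hy, Pi.zero_apply]
    refine .trans (congrArg _ (LinearMap.ext fun w => ?_)) (map_zero _)
    exact hW.proj_apply_of_notMem hy w.2

theorem finiteIndex [FiniteDimensional k V] (hW : IsInducedFrom W) (hne : W.toSubmodule ≠ ⊥) :
    H.FiniteIndex := by
  have : Finite (K ⧸ H) := WellFoundedGT.finite_of_iSupIndep hW.iSupIndep fun q h =>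
    hne (Submodule.map_injective_of_injective (ρ.apply_bijective q.out).1
      (h.trans (Submodule.map_bot _).symm))
  exact Subgroup.finiteIndex_of_finite_quotient

theorem character_eq_cosetInd [H.FiniteIndex] [FiniteDimensional k V] (hW : IsInducedFrom W) :
    ρ.character = cosetInd H W.toRepresentation.character := by
  have := Fintype.ofFinite (K ⧸ H)
  ext x
  calc ρ.character x
      = LinearMap.trace k V (ρ x * ∑ q : K ⧸ H,
          ρ q.out * (W.toSubmodule.subtype ∘ₗ hW.proj) * ρ q.out⁻¹) := by
        rw [hW.sum_conj_proj, mul_one, Representation.character]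
    _ = ∑ q : K ⧸ H, LinearMap.trace k V
          (ρ (q.out⁻¹ * x * q.out) * (W.toSubmodule.subtype ∘ₗ hW.proj)) := by
        rw [Finset.mul_sum, map_sum]
        refine Finset.sum_congr rfl fun q _ => ?_
        rw [← mul_assoc, LinearMap.trace_mul_comm]
        simp only [map_mul, mul_assoc]
    _ = cosetInd H W.toRepresentation.character x := by
        simp only [trace_mul_proj, cosetInd, finsum_eq_sum_of_fintype]

theorem isAtom (hW : IsInducedFrom W) (hρ : ρ.IsIrreducible) (hne : W.toSubmodule ≠ ⊥) :
    IsAtom W := by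
  refine isAtom_iff_le_of_ge.2 ⟨fun h => hne (congrArg Subrepresentation.toSubmodule h),
    fun U hU hUW => ?_⟩
  have hU' : U.toSubmodule ≠ ⊥ := fun h => hU (Subrepresentation.toSubmodule_injective h)
  have h : translate U = translate W :=
    (hW.iSupIndep.le_iff_eq_of_iSup_eq_top (iSup_translate_eq_top hρ hU')).1
      fun q => Submodule.map_mono hUW
  change W.toSubmodule ≤ U.toSubmodule
  rw [← translate_one, ← translate_one, h]

end IsInducedFrom

end InducedIrreducible

section FDRep

open CategoryTheory

universe u v

variable {k : Type u} {G : Type v} [Group G]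

theorem isIso_iff_bijective [CommRing k] {V W : FDRep k G} (f : V ⟶ W) :
    IsIso f ↔ Function.Bijective f.hom.hom.hom := by
  refine ⟨fun _ => (FDRep.isoToLinearEquiv (asIso f)).bijective, fun hf => ?_⟩
  have : IsIso ((forget₂ (FGModuleCat k) (ModuleCat k)).map f.hom) :=
    (ConcreteCategory.isIso_iff_bijective _).2 hf
  have : IsIso f.hom := isIso_of_reflects_iso f.hom (forget₂ (FGModuleCat k) (ModuleCat k))
  exact Action.isIso_of_hom_isIso f

theorem hom_apply_ρ [CommRing k] {V W : FDRep k G} (f : V ⟶ W) (g : G) (v : V) :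
    f.hom.hom.hom (V.ρ g v) = W.ρ g (f.hom.hom.hom v) :=
  congrArg (fun h => h.hom.hom v) (f.comm g)

theorem injective_of_mono [Field k] {V W : FDRep k G} (f : V ⟶ W) [Mono f] :
    Function.Injective f.hom.hom.hom :=
  (Rep.mono_iff_injective ((forget₂ (FDRep k G) (Rep k G)).map f)).1 inferInstance

theorem simple_iff_isIrreducible [Field k] {V : FDRep k G} :
    Simple V ↔ Representation.IsIrreducible V.ρ := by
  rw [isIrreducible_iff]
  constructor
  · intro hV
    refine ⟨not_subsingleton_iff_nontrivial.1 fun h => id_nonzero V ?_, fun U hU => ?_⟩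
    · ext v
      exact Subsingleton.elim (α := V) _ _
    · let ι : FDRep.of (Subrepresentation.toRepresentation ⟨U, hU⟩) ⟶ V :=
        { hom := FGModuleCat.ofHom U.subtype
          comm := fun g => rfl }
      have : Mono ι := ⟨fun a b hab => by
        ext x
        exact congrArg (fun h => h.hom.hom.hom x) hab⟩
      refine or_iff_not_imp_left.2 fun hU0 => ?_
      have hι : ι ≠ 0 := fun h => hU0 ((Submodule.eq_bot_iff U).2 fun u hu =>
        congrArg (fun h => h.hom.hom.hom (⟨u, hu⟩ : U)) h)
      have h := ((isIso_iff_bijective ι).1 (isIso_of_mono_of_nonzero hι)).2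
      exact U.range_subtype.symm.trans (LinearMap.range_eq_top.2 h)
  · rintro ⟨_, hV⟩
    refine ⟨fun {W} f _ => ⟨?_, fun hf => ?_⟩⟩
    · rintro h rfl
      obtain ⟨v, hv⟩ := exists_ne (0 : V)
      obtain ⟨w, hw⟩ := ((isIso_iff_bijective _).1 h).2 v
      exact hv hw.symm
    · refine (isIso_iff_bijective f).2 ⟨injective_of_mono f, LinearMap.range_eq_top.1 ?_⟩
      refine (hV (LinearMap.range f.hom.hom.hom) ?_).resolve_left fun h => hf ?_
      · rintro g _ ⟨w, rfl⟩
        exact ⟨W.ρ g w, hom_apply_ρ f g w⟩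
      · ext w
        exact LinearMap.congr_fun (LinearMap.range_eq_bot.1 h) w

end FDRep

section Weight

section CommRing

variable {k A V : Type*} [CommRing k] [AddCommGroup V] [Module k V]

/-- The joint eigenspace of the monoid `A` on which it acts through the character `σ`. -/
def weightSpace [Monoid A] (ρ : Representation k A V) (σ : A →* kˣ) : Submodule k V :=
  ⨅ a, Module.End.eigenspace (ρ a) (σ a : k)

theorem mem_weightSpace [Monoid A] {ρ : Representation k A V} {σ : A →* kˣ} {v : V} :
    v ∈ weightSpace ρ σ ↔ ∀ a, ρ a v = (σ a : k) • v := by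
  simp only [weightSpace, Submodule.mem_iInf, Module.End.mem_eigenspace_iff]

end CommRing

variable {k A V : Type*} [Field k] [AddCommGroup V] [Module k V]

theorem iSupIndep_weightSpace [CommMonoid A] (ρ : Representation k A V) :
    iSupIndep (weightSpace ρ) := by
  have hinj : Function.Injective fun (σ : A →* kˣ) (a : A) => (σ a : k) := fun σ τ h =>
    MonoidHom.ext fun a => Units.ext (congrFun h a)
  refine (iSupIndep.comp (Module.End.independent_iInf_maxGenEigenspace_of_forall_mapsTo ρ ?_)
    hinj).mono fun σ => iInf_mono fun a => Module.End.eigenspace_le_maxGenEigenspace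
  exact fun a b c => Module.End.mapsTo_maxGenEigenspace_of_comm
    (by rw [commute_iff_eq, ← map_mul, ← map_mul, mul_comm]) c

theorem exists_weightSpace_eq_top_of_finrank_eq_one [Group A] (ρ : Representation k A V)
    (hV : Module.finrank k V = 1) : ∃ σ : A →* kˣ, weightSpace ρ σ = ⊤ := by
  refine ⟨(LinearMap.det.comp ρ).toHomUnits, (Submodule.eq_top_iff').2 fun v => ?_⟩
  refine mem_weightSpace.2 fun a => ?_
  obtain ⟨c, hc, -⟩ := LinearMap.existsUnique_eq_smul_id_of_finrank_eq_one hV (ρ a)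
  simp [hc, hV]

theorem exists_weightSpace_ne_bot [CommGroup A] [IsAlgClosed k] [FiniteDimensional k V]
    [Nontrivial V] (ρ : Representation k A V) : ∃ σ : A →* kˣ, weightSpace ρ σ ≠ ⊥ := by
  obtain ⟨S, hS⟩ := exists_isAtom_subrepresentation ρ
  have := isIrreducible_toRepresentation_of_isAtom hS
  obtain ⟨σ, hσ⟩ := exists_weightSpace_eq_top_of_finrank_eq_one S.toRepresentation
    (Representation.IsIrreducible.finrank_eq_one_of_isMulCommutative S.toRepresentation)
  refine ⟨σ, fun h => hS.1 (Subrepresentation.toSubmodule_injective ?_)⟩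
  refine le_bot_iff.1 fun v hv => h ▸ mem_weightSpace.2 fun a => ?_
  have hvσ : (⟨v, hv⟩ : S.toSubmodule) ∈ weightSpace S.toRepresentation σ :=
    hσ ▸ Submodule.mem_top
  exact congrArg Subtype.val (mem_weightSpace.1 hvσ a)

end Weight

section Twist

variable {A G M : Type*} [Group A] [Group G] [Monoid M] {α : G →* MulAut A}

/-- The action `g · σ = σ ∘ α_{g⁻¹}` of `G` on characters of `A`. -/
def conjChar (α : G →* MulAut A) (g : G) (σ : A →* M) : A →* M :=
  σ.comp (α g⁻¹).toMonoidHom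

theorem conjChar_apply (g : G) (σ : A →* M) (a : A) : conjChar α g σ a = σ (α g⁻¹ a) :=
  rfl

theorem conjChar_one (σ : A →* M) : conjChar α 1 σ = σ := by
  ext a
  simp [conjChar_apply]

theorem conjChar_mul (g h : G) (σ : A →* M) :
    conjChar α (g * h) σ = conjChar α g (conjChar α h σ) := by
  ext a
  simp [conjChar_apply]

/-- The stabilizer `G(σ)` of the character `σ`. -/
def charStabilizer (α : G →* MulAut A) (σ : A →* M) : Subgroup G where
  carrier := {g | conjChar α g σ = σ}
  one_mem' := conjChar_one σ
  mul_mem' {g h} hg hh := by rw [Set.mem_ofPred_eq, conjChar_mul, hh, hg]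
  inv_mem' {g} hg := by
    rw [Set.mem_ofPred_eq, ← hg, ← conjChar_mul, inv_mul_cancel, conjChar_one, hg]

theorem mem_charStabilizer {σ : A →* M} {g : G} :
    g ∈ charStabilizer α σ ↔ conjChar α g σ = σ :=
  Iff.rfl

theorem apply_of_mem_charStabilizer {σ : A →* M} {g : G} (hg : g ∈ charStabilizer α σ) (a : A) :
    σ (α g a) = σ a := by
  have h := mem_charStabilizer.1 (inv_mem hg)
  rw [← DFunLike.congr_fun h a, conjChar_apply, inv_inv]

/-- The subgroup `K(σ) = A ⋊[α] G(σ)`, realized inside `A ⋊[α] G`. -/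
abbrev inertiaSubgroup (α : G →* MulAut A) (σ : A →* M) : Subgroup (A ⋊[α] G) :=
  (charStabilizer α σ).comap SemidirectProduct.rightHom

theorem conjChar_right_injective (σ : A →* M) :
    Function.Injective fun q : (A ⋊[α] G) ⧸ inertiaSubgroup α σ => conjChar α q.out.right σ := by
  intro q r (h : conjChar α q.out.right σ = conjChar α r.out.right σ)
  rw [← q.out_eq', ← r.out_eq', QuotientGroup.eq, Subgroup.mem_comap, mem_charStabilizer,
    map_mul, map_inv]
  change conjChar α (q.out.right⁻¹ * r.out.right) σ = σ
  rw [conjChar_mul, ← h, ← conjChar_mul, inv_mul_cancel, conjChar_one]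

variable {k V : Type*} [CommRing k] [AddCommGroup V] [Module k V] {σ : A →* kˣ}

/-- The representation `σ⊙τ : (a, s) ↦ σ(a) τ(s)` of `K(σ)`, for `τ` a representation of `G(σ)`. -/
def twist (σ : A →* kˣ) (τ : Representation k (charStabilizer α σ) V) :
    Representation k (inertiaSubgroup α σ) V where
  toFun x := (σ x.1.left : k) • τ (SemidirectProduct.rightHom.subgroupComap _ x)
  map_one' := by simp
  map_mul' x y := by
    have h : σ (α x.1.right y.1.left) = σ y.1.left := apply_of_mem_charStabilizer x.2 _
    rw [map_mul, map_mul, smul_mul_smul_comm, Subgroup.coe_mul, SemidirectProduct.mul_left,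
      map_mul, h, Units.val_mul]

theorem twist_apply (τ : Representation k (charStabilizer α σ) V)
    (x : inertiaSubgroup α σ) : twist σ τ x = (σ x.1.left : k) • τ ⟨x.1.right, x.2⟩ :=
  rfl

theorem character_twist {k V : Type*} [Field k] [AddCommGroup V] [Module k V] {σ : A →* kˣ}
    (τ : Representation k (charStabilizer α σ) V) (x : inertiaSubgroup α σ) :
    (twist σ τ).character x = σ x.1.left * τ.character ⟨x.1.right, x.2⟩ := by
  rw [Representation.character, twist_apply, map_smul, smul_eq_mul, Representation.character]

end Twist

section WeightSubrep

variable {k A G V : Type*} [CommRing k] [CommGroup A] [Group G] {α : G →* MulAut A}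
  [AddCommGroup V] [Module k V] {ρ : Representation k (A ⋊[α] G) V} {σ : A →* kˣ}

theorem apply_mem_weightSpace_conjChar (t : A ⋊[α] G) {v : V}
    (hv : v ∈ weightSpace (ρ.comp SemidirectProduct.inl) σ) :
    ρ t v ∈ weightSpace (ρ.comp SemidirectProduct.inl) (conjChar α t.right σ) := by
  refine mem_weightSpace.2 fun a => ?_
  have h : SemidirectProduct.inl a * t = t * SemidirectProduct.inl (α t.right⁻¹ a) := by
    ext <;> simp [mul_comm]
  rw [MonoidHom.comp_apply, ← Module.End.mul_apply, ← map_mul, h, map_mul, Module.End.mul_apply,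
    ← MonoidHom.comp_apply ρ, mem_weightSpace.1 hv, map_smul, conjChar_apply]

variable (ρ σ)

/-- The weight space of `σ` in the restriction of `ρ` to `A`, as a subrepresentation of the
restriction of `ρ` to `K(σ)`. -/
def weightSubrep : Subrepresentation (ρ.comp (inertiaSubgroup α σ).subtype) where
  toSubmodule := weightSpace (ρ.comp SemidirectProduct.inl) σ
  apply_mem_toSubmodule x v hv := by
    have h := apply_mem_weightSpace_conjChar x.1 hv
    rwa [show conjChar α x.1.right σ = σ from x.2] at h

/-- The representation of `G(σ)` on the weight space of `σ`. -/
def stabilizerRep : Representation k (charStabilizer α σ) (weightSubrep ρ σ).toSubmodule :=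
  (weightSubrep ρ σ).toRepresentation.comp
    ((SemidirectProduct.inr.comp (charStabilizer α σ).subtype).codRestrict _ fun s => s.2)

theorem toRepresentation_weightSubrep :
    (weightSubrep ρ σ).toRepresentation = twist σ (stabilizerRep ρ σ) := by
  ext x v
  have hv := (stabilizerRep ρ σ ⟨x.1.right, x.2⟩ v).2
  refine Eq.trans ?_ (mem_weightSpace.1 hv x.1.left)
  change ρ x.1 v = ρ (SemidirectProduct.inl x.1.left) (ρ (SemidirectProduct.inr x.1.right) v)
  rw [← Module.End.mul_apply, ← map_mul, SemidirectProduct.inl_left_mul_inr_right]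

end WeightSubrep

section Mackey

variable {k A G V : Type*} [Field k] [CommGroup A] [Group G] {α : G →* MulAut A}
  [AddCommGroup V] [Module k V] {ρ : Representation k (A ⋊[α] G) V} {σ : A →* kˣ}

theorem isInducedFrom_weightSubrep (hρ : ρ.IsIrreducible)
    (hσ : (weightSubrep ρ σ).toSubmodule ≠ ⊥) : IsInducedFrom (weightSubrep ρ σ) where
  iSupIndep := ((iSupIndep_weightSpace _).comp (conjChar_right_injective σ)).mono fun q => by
    rintro _ ⟨w, hw, rfl⟩
    exact apply_mem_weightSpace_conjChar _ hw
  iSup_eq_top := iSup_translate_eq_top hρ hσ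

theorem isIrreducible_stabilizerRep (hρ : ρ.IsIrreducible)
    (hσ : (weightSubrep ρ σ).toSubmodule ≠ ⊥) : (stabilizerRep ρ σ).IsIrreducible := by
  have hW := isIrreducible_toRepresentation_of_isAtom
    ((isInducedFrom_weightSubrep hρ hσ).isAtom hρ hσ)
  rw [toRepresentation_weightSubrep] at hW
  exact isIrreducible_of_forall_eq_smul hW fun x => ⟨_, _, twist_apply _ x⟩

end Mackey

section General

open CategoryTheory

universe u

theorem irreducible_char_eq_induced_general {k : Type u} [Field k] [IsAlgClosed k] {A G : Type*}
    [CommGroup A] [Group G] (α : G →* MulAut A) (V : FDRep k (A ⋊[α] G)) [Simple V] :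
    ∃ σ : A →* kˣ, (inertiaSubgroup α σ).FiniteIndex ∧
      ∃ W : FDRep k (charStabilizer α σ), Simple W ∧
        V.character = cosetInd (inertiaSubgroup α σ) (twist σ W.ρ).character := by
  have hV := simple_iff_isIrreducible.1 ‹Simple V›
  have := (isIrreducible_iff.1 hV).1
  obtain ⟨σ, hσ⟩ := exists_weightSpace_ne_bot (V.ρ.comp (SemidirectProduct.inl : A →* A ⋊[α] G))
  have hW : IsInducedFrom (weightSubrep V.ρ σ) := isInducedFrom_weightSubrep hV hσ
  have hfin := hW.finiteIndex hσ
  refine ⟨σ, hfin, FDRep.of (stabilizerRep V.ρ σ),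
    simple_iff_isIrreducible.2 (isIrreducible_stabilizerRep hV hσ), ?_⟩
  exact toRepresentation_weightSubrep V.ρ σ ▸ hW.character_eq_cosetInd

end General

open scoped Classical in
/-- Proposition 4.1, group case (the Mackey machine): every irreducible character of
`K = A ⋊[α] G` is induced from a character `σ⊙χ_τ : (a, s) ↦ σ(a)·χ_τ(s)` of
`K(σ) = A ⋊[α] G(σ)`, where `σ ∈ Â`, `G(σ)` is its stabilizer, and `χ_τ` is an
irreducible character of `G(σ)`. -/
theorem irreducible_char_eq_induced {A G : Type} [CommGroup A] [Fintype A]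
    [Group G] [Fintype G] (α : G →* MulAut A)
    (V : FDRep ℂ (A ⋊[α] G)) [CategoryTheory.Simple V] :
    ∃ (σ : A →* ℂˣ) (Gσ : Subgroup G),
      (∀ g : G, g ∈ Gσ ↔ ∀ b : A, σ ((α g⁻¹) b) = σ b) ∧
      ∃ W : FDRep ℂ ↥Gσ, CategoryTheory.Simple W ∧
        V.character = ind (Gσ.comap (SemidirectProduct.rightHom : A ⋊[α] G →* G))
          (fun x => if hx : x.right ∈ Gσ
            then ((σ x.left : ℂˣ) : ℂ) * W.character ⟨x.right, hx⟩ else 0) := by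
  obtain ⟨σ, -, W, hW, hV⟩ := irreducible_char_eq_induced_general α V
  refine ⟨σ, charStabilizer α σ, fun _ => DFunLike.ext_iff, W, hW, hV.trans (Eq.symm ?_)⟩
  exact ind_eq_cosetInd (fun h x => (twist σ W.ρ).char_conj x h)
    fun h => (dif_pos h.2).trans (character_twist W.ρ h).symm

end Stmt15
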